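/- Let X be a rack and A an associative (not necessarily commutative) ring, regarded as a trivial X-module. For all p₁, p₂ ≥ 0 and all f₁ : X^{p₁} → A, f₂ : X^{p₂} → A, one has d_R^{p₁+p₂+1}(f₁ ≺ f₂) = (d_R^{p₁+1} f₁) ≺ f₂ + (−1)^{p₁} f₁ ≺ (d_R^{p₂+1} f₂) as functions X^{p₁+p₂+1} → A. -/

import Mathlib

/-- The set of `(p,q)`-shuffles: permutations increasing on the first `p`
and on the last `q` (0-indexed) positions. -/
def Sh (p q : ℕ) : Finset (Equiv.Perm (Fin (p + q))) :=
  Finset.univ.filter fun σ =>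
    (∀ i j : Fin (p + q), (i : ℕ) < (j : ℕ) → (j : ℕ) < p → σ i < σ j) ∧
    (∀ i j : Fin (p + q), (i : ℕ) < (j : ℕ) → p ≤ (i : ℕ) → σ i < σ j)

/-- The `(p,q)`-shuffles with `σ(p) = p + q` (1-indexed). -/
def ShL (p q : ℕ) : Finset (Equiv.Perm (Fin (p + q))) :=
  (Sh p q).filter fun σ => ∀ i : Fin (p + q), (i : ℕ) + 1 = p → (σ i : ℕ) + 1 = p + q

/-- The `(p,q)`-shuffles with `σ(p+q) = p + q` (1-indexed). -/
def ShT (p q : ℕ) : Finset (Equiv.Perm (Fin (p + q))) :=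
  (Sh p q).filter fun σ => ∀ i : Fin (p + q), (i : ℕ) + 1 = p + q → (σ i : ℕ) + 1 = p + q

/-- `y k = x_{i₁} ▷ (x_{i₂} ▷ (⋯ ▷ (x_{i_j} ▷ x_{σ(k)})⋯))`, where `i₁ < ⋯ < i_j`
are the elements of `{σ(p+1),…,σ(p+q)}` (1-indexed) smaller than `σ(k)`. -/
def yVal {X : Type*} (op : X → X → X) (p q : ℕ) (σ : Equiv.Perm (Fin (p + q)))
    (x : Fin (p + q) → X) (k : Fin p) : X :=
  ((Finset.univ.filter fun i : Fin (p + q) =>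
      p ≤ ((σ.symm i : Fin (p + q)) : ℕ) ∧
        i < σ ⟨k, Nat.lt_of_lt_of_le k.isLt (Nat.le_add_right p q)⟩).sort (· ≤ ·)).foldr
    (fun i acc => op (x i) acc)
    (x (σ ⟨k, Nat.lt_of_lt_of_le k.isLt (Nat.le_add_right p q)⟩))

/-- The dendriform product `≻` on rack cochains. -/
def succP {X A : Type*} [Ring A] (op : X → X → X) (p q : ℕ)
    (f₁ : (Fin p → X) → A) (f₂ : (Fin q → X) → A) : (Fin (p + q) → X) → A :=
  fun x => ∑ σ ∈ ShT p q, (Equiv.Perm.sign σ : ℤ) •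
    (f₁ (fun k => yVal op p q σ x k) *
     f₂ (fun k => x (σ ⟨p + (k : ℕ), Nat.add_lt_add_left k.isLt p⟩)))

/-- The dendriform product `≺` on rack cochains. -/
def precP {X A : Type*} [Ring A] (op : X → X → X) (p q : ℕ)
    (f₁ : (Fin p → X) → A) (f₂ : (Fin q → X) → A) : (Fin (p + q) → X) → A :=
  fun x => ∑ σ ∈ ShL p q, (Equiv.Perm.sign σ : ℤ) •
    (f₁ (fun k => yVal op p q σ x k) *
     f₂ (fun k => x (σ ⟨p + (k : ℕ), Nat.add_lt_add_left k.isLt p⟩)))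

/-- The cubical face maps on tuples: for `ε = false` (i.e. ε = 0),
`(x₁,…,x_{n+1}) ↦ (x₁,…,x_{j-1}, x_j ▷ x_{j+1}, …, x_j ▷ x_{n+1})`
and for `ε = true` (i.e. ε = 1), `(x₁,…,x_{n+1}) ↦ (x₁,…,x_{j-1}, x_{j+1},…,x_{n+1})`
(`j` is 0-indexed here). -/
def rackFace {X : Type*} (op : X → X → X) (ε : Bool) {n : ℕ} (j : Fin (n + 1))
    (x : Fin (n + 1) → X) : Fin n → X :=
  fun k => if (k : ℕ) < (j : ℕ) then x k.castSucc
    else if ε then x k.succ else op (x j) (x k.succ)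

/-- The rack differential with trivial coefficients:
`d_R f (x) = Σ_{i=1}^{n+1} (−1)^i [ f(d_{i,0} x) − f(d_{i,1} x) ]`. -/
def rackDiff {X A : Type*} [AddCommGroup A] (op : X → X → X) {n : ℕ}
    (f : (Fin n → X) → A) : (Fin (n + 1) → X) → A :=
  fun x => ∑ j : Fin (n + 1),
    (-1 : ℤ) ^ ((j : ℕ) + 1) • (f (rackFace op false j x) - f (rackFace op true j x))

/-!
Both sides are sums indexed by an entry of the tuple together with a shuffle. A term of
`d f₁ ≺ f₂` or `f₁ ≺ d f₂` deletes one entry of one block of a shuffle `τ`; what remains is a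
shuffle `σ` of the other `p + q` entries, and conversely the deleted entry `j` fits into the given
block of `σ` at exactly one place. The signs agree, and by self-distributivity the deletion commutes
with the iterated actions defining the arguments of `f₁`. Writing `aε`, `bε` for the values of `f₁`
and `f₂` at the arguments belonging to `σ` of the face `d_{j,ε} x`, the three sides contribute to
`(j, σ)`, up to a common sign, `a₀ b₀ - a₁ b₁`, `(a₀ - a₁) b₁` and `a₀ (b₀ - b₁)`.

The condition that the left block ends with the largest entry may differ between `τ` and `σ` when
`j` is the last entry or the left block of `σ` is empty, but then the terms vanish: both faces at
the last entry agree, and `d f₁ = 0` if `f₁` has no arguments.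
-/

section Insertion

variable {m n : ℕ}

/-- The permutation that sends `k` to `j` and acts on the remaining positions as `σ`, these being
identified with `Fin n` through `k.succAbove` in the source and `j.succAbove` in the target. -/
def insertPerm (k j : Fin (n + 1)) (σ : Equiv.Perm (Fin n)) : Equiv.Perm (Fin (n + 1)) :=
  j.cycleRange⁻¹ * Equiv.Perm.decomposeFin.symm (0, σ) * k.cycleRange

@[simp]
lemma insertPerm_self (k j : Fin (n + 1)) (σ : Equiv.Perm (Fin n)) : insertPerm k j σ k = j := by
  simp [insertPerm]

@[simp]
lemma insertPerm_succAbove (k j : Fin (n + 1)) (σ : Equiv.Perm (Fin n)) (i : Fin n) :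
    insertPerm k j σ (k.succAbove i) = j.succAbove (σ i) := by
  simp [insertPerm]

lemma sign_insertPerm (k j : Fin (n + 1)) (σ : Equiv.Perm (Fin n)) :
    (Equiv.Perm.sign (insertPerm k j σ) : ℤ) = (-1) ^ (j + k : ℕ) * Equiv.Perm.sign σ := by
  simp [insertPerm, Fin.sign_cycleRange, pow_add, mul_right_comm]

lemma insertPerm_bijective (k : Fin (n + 1)) :
    Function.Bijective fun a : Fin (n + 1) × Equiv.Perm (Fin n) ↦ insertPerm k a.1 a.2 := by
  rw [Fintype.bijective_iff_injective_and_card]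
  refine ⟨fun ⟨j, σ⟩ ⟨j', σ'⟩ h ↦ ?_, by simp [Fintype.card_perm, Nat.factorial_succ]⟩
  have apply_eq (i) : insertPerm k j σ i = insertPerm k j' σ' i := congrArg (· i) h
  obtain rfl : j = j' := by simpa using apply_eq k
  have : σ = σ' := Equiv.ext fun i ↦ by simpa using apply_eq (k.succAbove i)
  rw [this]

/-- The place `i` cuts `g : Fin m → Fin n` at the height `j` if the entries of `g` before `i` are
exactly those below `j`, that is, if `j` can be inserted into `g` at `i` in increasing order (the
old values being renumbered by `j.succAbove`). -/
def IsCut (i : Fin (m + 1)) (j : Fin (n + 1)) (g : Fin m → Fin n) : Prop :=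
  ∀ l, l.castSucc < i ↔ (g l).castSucc < j

lemma strictMono_insertNth_iff (i : Fin (m + 1)) (j : Fin (n + 1)) (g : Fin m → Fin n) :
    StrictMono (i.insertNth j (j.succAbove ∘ g) : Fin (m + 1) → Fin (n + 1)) ↔
      StrictMono g ∧ IsCut i j g := by
  simp only [StrictMono, IsCut, Fin.forall_iff_succAbove i, Fin.insertNth_apply_same,
    Fin.insertNth_apply_succAbove, Function.comp_apply, Fin.succAbove_lt_succAbove_iff,
    Fin.lt_succAbove_iff_le_castSucc, Fin.succAbove_lt_iff_castSucc_lt]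
  grind

lemma existsUnique_isCut {g : Fin m → Fin n} (hg : Monotone g) (j : Fin (n + 1)) :
    ∃! i, IsCut i j g := by
  refine existsUnique_of_exists_of_unique ?_ fun i i' hi hi' ↦ ?_
  · by_cases h : ∃ l, j ≤ (g l).castSucc
    · obtain ⟨l, hl, hmin⟩ := WellFounded.has_min wellFounded_lt {l | j ≤ (g l).castSucc} h
      refine ⟨l.castSucc, fun l' ↦ ⟨fun hlt ↦ ?_, fun hlt ↦ ?_⟩⟩
      · by_contra! hle
        exact hmin l' hle (Fin.castSucc_lt_castSucc_iff.1 hlt)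
      · by_contra! hle
        exact (hl.trans (Fin.castSucc_le_castSucc_iff.2
          (hg (Fin.castSucc_le_castSucc_iff.1 hle)))).not_gt hlt
    · push Not at h
      exact ⟨Fin.last m, fun l ↦ iff_of_true (Fin.castSucc_lt_last l) (h l)⟩
  · have same_below (l : Fin m) : l.castSucc < i ↔ l.castSucc < i' := (hi l).trans (hi' l).symm
    by_contra hne
    rcases lt_or_gt_of_ne hne with hlt | hlt
    · have := same_below (i.castPred (Fin.ne_last_of_lt hlt))
      simp [hlt] at this
    · have := same_below (i'.castPred (Fin.ne_last_of_lt hlt))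
      simp [hlt] at this

open Classical in
/-- Deleting the entry `i` of a block of `τ` leaves a permutation `σ` and the deleted value `j`;
conversely `i` is recovered as the only place where `j` fits into the block of `σ`. -/
lemma sum_sum_eq_sum_sum_of_insertPerm {A : Type*} [AddCommMonoid A]
    (block : Fin m → Fin n) (position : Fin (m + 1) → Fin (n + 1))
    {R : Equiv.Perm (Fin (n + 1)) → Prop} {S : Equiv.Perm (Fin n) → Prop}
    (hRS : ∀ i j (σ : Equiv.Perm (Fin n)),
      R (insertPerm (position i) j σ) ↔ S σ ∧ IsCut i j (σ ∘ block))
    (hS : ∀ σ : Equiv.Perm (Fin n), S σ → Monotone (σ ∘ block))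
    {G : Equiv.Perm (Fin (n + 1)) → Fin (m + 1) → A} {F : Fin (n + 1) → Equiv.Perm (Fin n) → A}
    (hGF : ∀ i j (σ : Equiv.Perm (Fin n)),
      IsCut i j (σ ∘ block) → G (insertPerm (position i) j σ) i = F j σ) :
    ∑ τ with R τ, ∑ i, G τ i = ∑ j, ∑ σ with S σ, F j σ := by
  have sum_cut (j : Fin (n + 1)) (σ : Equiv.Perm (Fin n)) :
      (∑ i, if S σ ∧ IsCut i j (σ ∘ block) then F j σ else 0) =
      if S σ then F j σ else 0 := by
    by_cases hσ : S σ
    · obtain ⟨i, hi, hunique⟩ := existsUnique_isCut (hS σ hσ) j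
      have cut_iff (i') : IsCut i' j (σ ∘ block) ↔ i' = i := ⟨hunique i', fun h ↦ h ▸ hi⟩
      simp [hσ, cut_iff]
    · simp [hσ]
  calc ∑ τ with R τ, ∑ i, G τ i
      = ∑ i, ∑ τ, if R τ then G τ i else 0 := by
        rw [Finset.sum_comm]
        simp only [Finset.sum_filter]
    _ = ∑ i, ∑ a : Fin (n + 1) × Equiv.Perm (Fin n),
          if S a.2 ∧ IsCut i a.1 (a.2 ∘ block) then F a.1 a.2 else 0 := by
        refine Finset.sum_congr rfl fun i _ ↦ ?_
        rw [← (insertPerm_bijective (position i)).sum_comp]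
        refine Finset.sum_congr rfl fun a _ ↦ ?_
        simp only [hRS]
        exact ite_congr rfl (fun h ↦ hGF i a.1 a.2 h.2) fun _ ↦ rfl
    _ = ∑ j, ∑ σ with S σ, F j σ := by
        rw [Finset.sum_comm, Fintype.sum_prod_type]
        simp only [sum_cut, Finset.sum_filter]

end Insertion

section Twist

variable {X ι κ : Type*} [LinearOrder ι] [LinearOrder κ] {op : X → X → X}

/-- The iterated action `x i₁ ▷ (⋯ ▷ (x iₛ ▷ a))`, where `i₁ < ⋯ < iₛ` are the elements of `S`. -/
def iterAct (op : X → X → X) (x : ι → X) (S : Finset ι) (a : X) : X :=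
  (S.sort (· ≤ ·)).foldr (fun i b ↦ op (x i) b) a

lemma iterAct_singleton (x : ι → X) (i : ι) (a : X) : iterAct op x {i} a = op (x i) a := by
  simp [iterAct]

lemma iterAct_union (x : ι → X) {S T : Finset ι} (h : ∀ i ∈ S, ∀ k ∈ T, i < k) (a : X) :
    iterAct op x (S ∪ T) a = iterAct op x S (iterAct op x T a) := by
  have sort_union : (S ∪ T).sort (· ≤ ·) = S.sort (· ≤ ·) ++ T.sort (· ≤ ·) := by
    refine List.Pairwise.eq_of_mem_iff (S ∪ T).sortedLT_sort.pairwise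
      (List.pairwise_append.2 ⟨S.sortedLT_sort.pairwise, T.sortedLT_sort.pairwise, ?_⟩) ?_
    · simpa using h
    · simp
  simp only [iterAct, sort_union, List.foldr_append]

lemma iterAct_congr {x y : ι → X} {S : Finset ι} (h : ∀ i ∈ S, x i = y i) (a : X) :
    iterAct op x S a = iterAct op y S a :=
  List.foldr_ext _ _ a fun i hi b ↦ by rw [h i ((Finset.mem_sort _).1 hi)]

lemma iterAct_image (x : κ → X) {e : ι → κ} (he : StrictMono e) (S : Finset ι) (a : X) :
    iterAct op x (S.image e) a = iterAct op (x ∘ e) S a := by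
  have sort_image : (S.image e).sort (· ≤ ·) = (S.sort (· ≤ ·)).map e := by
    have := StrictMonoOn.map_finsetSort (f := ⟨e, he.injective⟩) (s := S) (he.strictMonoOn _)
    simpa only [Finset.map_eq_image, Function.Embedding.coeFn_mk] using this.symm
  rw [iterAct, sort_image, List.foldr_map]
  rfl

lemma iterAct_op (hself : ∀ x y z : X, op x (op y z) = op (op x y) (op x z))
    (x : ι → X) (S : Finset ι) (a b : X) :
    iterAct op x S (op a b) = op (iterAct op x S a) (iterAct op x S b) := by
  unfold iterAct
  induction S.sort (· ≤ ·) with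
  | nil => rfl
  | cons i l ih => rw [List.foldr_cons, ih, hself]; rfl

lemma op_iterAct (hself : ∀ x y z : X, op x (op y z) = op (op x y) (op x z))
    (x : ι → X) (S : Finset ι) (a b : X) :
    op a (iterAct op x S b) = iterAct op (op a ∘ x) S (op a b) := by
  unfold iterAct
  induction S.sort (· ≤ ·) with
  | nil => rfl
  | cons i l ih => rw [List.foldr_cons, hself, ih]; rfl

/-- The tuple `x` in which the entry at `i` is acted upon by all the entries before it whose index
lies in `T`; the arguments `y_k` of `f₁` in `f₁ ≺ f₂` are of this form. -/
def twist (op : X → X → X) (x : ι → X) (T : Finset ι) (i : ι) : X :=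
  iterAct op x {k ∈ T | k < i} (x i)

lemma twist_congr {x y : ι → X} (T : Finset ι) {i : ι} (h : ∀ k ≤ i, x k = y k) :
    twist op x T i = twist op y T i := by
  rw [twist, twist, h i le_rfl]
  exact iterAct_congr (fun k hk ↦ h k (Finset.mem_filter.1 hk).2.le) _

lemma twist_image (x : κ → X) {e : ι → κ} (he : StrictMono e) (T : Finset ι) (i : ι) :
    twist op x (T.image e) (e i) = twist op (x ∘ e) T i := by
  have filter_image : {k ∈ T.image e | k < e i} = ({k ∈ T | k < i} : Finset ι).image e := by
    simp only [Finset.filter_image, he.lt_iff_lt]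
  rw [twist, filter_image, iterAct_image x he]
  rfl

lemma filter_lt_eq_union {T : Finset ι} {j k : ι} (hjk : j < k) (hj : j ∉ T) :
    {i ∈ T | i < k} = {i ∈ T | i < j} ∪ {i ∈ T | j < i ∧ i < k} := by
  grind

lemma twist_insert_of_le (x : ι → X) (T : Finset ι) {j k : ι} (hkj : k ≤ j) :
    twist op x (insert j T) k = twist op x T k := by
  rw [twist, Finset.filter_insert, if_neg hkj.not_gt, twist]

lemma twist_insert_of_lt (hself : ∀ x y z : X, op x (op y z) = op (op x y) (op x z))
    (x : ι → X) {T : Finset ι} {j k : ι} (hjk : j < k) (hj : j ∉ T) :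
    twist op x (insert j T) k = op (twist op x T j) (twist op x T k) := by
  have filter_insert : {i ∈ insert j T | i < k} =
      {i ∈ T | i < j} ∪ ({j} ∪ {i ∈ T | j < i ∧ i < k}) := by
    grind
  rw [twist, filter_insert, iterAct_union _ (by grind), iterAct_union _ (by grind),
    iterAct_singleton, iterAct_op hself, ← iterAct_union _ (by grind), ← filter_lt_eq_union hjk hj,
    twist, twist]

lemma op_twist_of_lt (hself : ∀ x y z : X, op x (op y z) = op (op x y) (op x z))
    (x : ι → X) {T : Finset ι} {j k : ι} (hjk : j < k) (hj : j ∉ T) :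
    op (twist op x T j) (twist op x T k) =
      twist op (fun i ↦ if i < j then x i else op (x j) (x i)) T k := by
  simp only [twist, filter_lt_eq_union hjk hj, if_neg hjk.not_gt]
  set y : ι → X := fun i ↦ if i < j then x i else op (x j) (x i)
  set S := {i ∈ T | i < j}
  set U := {i ∈ T | j < i ∧ i < k}
  have S_lt_U : ∀ i ∈ S, ∀ l ∈ U, i < l := by grind
  calc op (iterAct op x S (x j)) (iterAct op x (S ∪ U) (x k))
      = iterAct op x S (iterAct op (op (x j) ∘ x) U (op (x j) (x k))) := by
        rw [iterAct_union x S_lt_U, ← iterAct_op hself, op_iterAct hself]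
    _ = iterAct op y S (iterAct op y U (op (x j) (x k))) := by
        rw [iterAct_congr (x := x) (y := y) (S := S) (by grind),
          iterAct_congr (x := op (x j) ∘ x) (y := y) (S := U) (by grind)]
    _ = iterAct op y (S ∪ U) (op (x j) (x k)) := (iterAct_union y S_lt_U _).symm

end Twist

section Face

variable {X : Type*} {op : X → X → X} {m n : ℕ}

lemma rackFace_true (j : Fin (n + 1)) (x : Fin (n + 1) → X) :
    rackFace op true j x = x ∘ j.succAbove := by
  ext i
  simp only [rackFace, if_true, Function.comp_apply, Fin.succAbove, Fin.lt_def, Fin.val_castSucc,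
    apply_ite x]

lemma rackFace_false_apply (j : Fin (n + 1)) (x : Fin (n + 1) → X) (i : Fin n) :
    rackFace op false j x i =
      if i.castSucc < j then x (j.succAbove i) else op (x j) (x (j.succAbove i)) := by
  simp only [rackFace, Fin.succAbove, Fin.lt_def, Fin.val_castSucc]
  split_ifs <;> first | contradiction | rfl

lemma rackFace_last (ε : Bool) (x : Fin (n + 1) → X) :
    rackFace op ε (Fin.last n) x = x ∘ Fin.castSucc := by
  ext i
  simp [rackFace]

lemma rackFace_comp_insertNth (ε : Bool) {i : Fin (m + 1)} {j : Fin (n + 1)} {g : Fin m → Fin n}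
    (hcut : IsCut i j g) (x : Fin (n + 1) → X) :
    rackFace op ε i (x ∘ (i.insertNth j (j.succAbove ∘ g) : Fin (m + 1) → Fin (n + 1))) =
      rackFace op ε j x ∘ g := by
  ext l
  cases ε <;> simp [rackFace_true, rackFace_false_apply, hcut l]

lemma notMem_image_succAbove (j : Fin (n + 1)) (T : Finset (Fin n)) :
    j ∉ T.image j.succAbove := by
  simp [Fin.succAbove_ne]

lemma rackFace_twist (hself : ∀ x y z : X, op x (op y z) = op (op x y) (op x z)) (ε : Bool)
    (j : Fin (n + 1)) (x : Fin (n + 1) → X) (T : Finset (Fin n)) :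
    rackFace op ε j (twist op x (T.image j.succAbove)) =
      twist op (rackFace op ε j x) T := by
  ext i
  cases ε with
  | true =>
    simpa only [rackFace_true, Function.comp_apply] using
      twist_image x j.strictMono_succAbove T i
  | false =>
    have face_eq : rackFace op false j x =
        (fun k ↦ if k < j then x k else op (x j) (x k)) ∘ j.succAbove := by
      ext k
      simp [rackFace_false_apply, Fin.succAbove_lt_iff_castSucc_lt]
    rw [face_eq, ← twist_image _ j.strictMono_succAbove, rackFace_false_apply]
    split_ifs with h
    · have below := (Fin.succAbove_lt_iff_castSucc_lt j i).2 h
      exact twist_congr _ fun k hk ↦ by rw [if_pos (hk.trans_lt below)]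
    · have above := (Fin.lt_succAbove_iff_le_castSucc j i).2 (not_lt.1 h)
      exact op_twist_of_lt hself x above (notMem_image_succAbove j T)

lemma twist_insert_succAbove (hself : ∀ x y z : X, op x (op y z) = op (op x y) (op x z))
    (j : Fin (n + 1)) (x : Fin (n + 1) → X) (T : Finset (Fin n)) (i : Fin n) :
    twist op x (insert j (T.image j.succAbove)) (j.succAbove i) =
      twist op (rackFace op false j x) T i := by
  rw [← rackFace_twist hself, rackFace_false_apply]
  split_ifs with h
  · exact twist_insert_of_le _ _ ((Fin.succAbove_lt_iff_castSucc_lt j i).2 h).le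
  · exact twist_insert_of_lt hself _ ((Fin.lt_succAbove_iff_le_castSucc j i).2 (not_lt.1 h))
      (notMem_image_succAbove j T)

end Face

section Shuffle

variable {p q n : ℕ}

/-- The `k`-th position of the first of two consecutive blocks of lengths `p` and `q`. The total
length is a variable `n`, so that no casts appear when a block grows by one. -/
def leftBlock (h : p + q = n) (k : Fin p) : Fin n :=
  (k.castAdd q).cast h

/-- The `k`-th position of the second of two consecutive blocks of lengths `p` and `q`. -/
def rightBlock (h : p + q = n) (k : Fin q) : Fin n :=
  (k.natAdd p).cast h

@[simp]
lemma val_leftBlock (h : p + q = n) (k : Fin p) : (leftBlock h k : ℕ) = k := rfl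

@[simp]
lemma val_rightBlock (h : p + q = n) (k : Fin q) : (rightBlock h k : ℕ) = p + k := rfl

lemma exists_rightBlock_eq_iff (h : p + q = n) (i : Fin n) :
    (∃ k, rightBlock h k = i) ↔ p ≤ (i : ℕ) := by
  refine ⟨?_, fun hi ↦ ⟨⟨i - p, by omega⟩, Fin.ext (Nat.add_sub_of_le hi)⟩⟩
  rintro ⟨k, rfl⟩
  exact Nat.le_add_right p k

lemma leftBlock_succAbove (h : p + q = n) (h' : p + 1 + q = n + 1) (i : Fin (p + 1)) (k : Fin p) :
    leftBlock h' (i.succAbove k) = (leftBlock h' i).succAbove (leftBlock h k) := by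
  ext
  simp only [val_leftBlock, Fin.succAbove, Fin.lt_def, Fin.val_castSucc]
  split_ifs <;> rfl

lemma rightBlock_succ_left (h : p + q = n) (h' : p + 1 + q = n + 1) (i : Fin (p + 1)) (k : Fin q) :
    rightBlock h' k = (leftBlock h' i).succAbove (rightBlock h k) := by
  rw [Fin.succAbove_of_le_castSucc _ _ (Fin.le_def.2 (by
    simp only [val_leftBlock, Fin.val_castSucc, val_rightBlock]
    omega))]
  ext
  simp only [val_rightBlock, Fin.val_succ]
  omega

lemma leftBlock_succ_right (h : p + q = n) (h' : p + (q + 1) = n + 1) (i : Fin (q + 1))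
    (k : Fin p) : leftBlock h' k = (rightBlock h' i).succAbove (leftBlock h k) := by
  rw [Fin.succAbove_of_castSucc_lt _ _ (Fin.lt_def.2 (by
    simp only [val_rightBlock, Fin.val_castSucc, val_leftBlock]
    omega))]
  rfl

lemma rightBlock_succAbove (h : p + q = n) (h' : p + (q + 1) = n + 1) (i : Fin (q + 1))
    (k : Fin q) : rightBlock h' (i.succAbove k) = (rightBlock h' i).succAbove (rightBlock h k) := by
  ext
  simp only [val_rightBlock, Fin.succAbove, Fin.lt_def, Fin.val_castSucc, add_lt_add_iff_left]
  split_ifs <;> rfl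

lemma insertPerm_leftBlock_comp_leftBlock (h : p + q = n) (h' : p + 1 + q = n + 1)
    (i : Fin (p + 1)) (j : Fin (n + 1)) (σ : Equiv.Perm (Fin n)) :
    insertPerm (leftBlock h' i) j σ ∘ leftBlock h' =
      (i.insertNth j (j.succAbove ∘ σ ∘ leftBlock h) : Fin (p + 1) → Fin (n + 1)) := by
  refine Fin.eq_insertNth_iff.2 ⟨insertPerm_self _ _ _, funext fun k ↦ ?_⟩
  simp [Fin.removeNth, leftBlock_succAbove h h']

lemma insertPerm_leftBlock_comp_rightBlock (h : p + q = n) (h' : p + 1 + q = n + 1)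
    (i : Fin (p + 1)) (j : Fin (n + 1)) (σ : Equiv.Perm (Fin n)) :
    insertPerm (leftBlock h' i) j σ ∘ rightBlock h' = j.succAbove ∘ σ ∘ rightBlock h := by
  ext k
  simp [rightBlock_succ_left h h' i]

lemma insertPerm_rightBlock_comp_leftBlock (h : p + q = n) (h' : p + (q + 1) = n + 1)
    (i : Fin (q + 1)) (j : Fin (n + 1)) (σ : Equiv.Perm (Fin n)) :
    insertPerm (rightBlock h' i) j σ ∘ leftBlock h' = j.succAbove ∘ σ ∘ leftBlock h := by
  ext k
  simp [leftBlock_succ_right h h' i]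

lemma insertPerm_rightBlock_comp_rightBlock (h : p + q = n) (h' : p + (q + 1) = n + 1)
    (i : Fin (q + 1)) (j : Fin (n + 1)) (σ : Equiv.Perm (Fin n)) :
    insertPerm (rightBlock h' i) j σ ∘ rightBlock h' =
      (i.insertNth j (j.succAbove ∘ σ ∘ rightBlock h) : Fin (q + 1) → Fin (n + 1)) := by
  refine Fin.eq_insertNth_iff.2 ⟨insertPerm_self _ _ _, funext fun k ↦ ?_⟩
  simp [Fin.removeNth, rightBlock_succAbove h h']

/-- The `(p, q)`-shuffles, as permutations of `Fin n` with `n = p + q`. -/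
def IsShuffle (h : p + q = n) (σ : Equiv.Perm (Fin n)) : Prop :=
  StrictMono (σ ∘ leftBlock h) ∧ StrictMono (σ ∘ rightBlock h)

lemma strictMono_succAbove_comp_iff {m : ℕ} (j : Fin (n + 1)) (g : Fin m → Fin n) :
    StrictMono (j.succAbove ∘ g) ↔ StrictMono g := by
  simp only [StrictMono, Function.comp_apply, Fin.succAbove_lt_succAbove_iff]

lemma isShuffle_insertPerm_leftBlock_iff (h : p + q = n) (h' : p + 1 + q = n + 1) (i : Fin (p + 1))
    (j : Fin (n + 1)) (σ : Equiv.Perm (Fin n)) :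
    IsShuffle h' (insertPerm (leftBlock h' i) j σ) ↔
      IsShuffle h σ ∧ IsCut i j (σ ∘ leftBlock h) := by
  rw [IsShuffle, IsShuffle, insertPerm_leftBlock_comp_leftBlock h,
    insertPerm_leftBlock_comp_rightBlock h, strictMono_insertNth_iff, strictMono_succAbove_comp_iff,
    and_right_comm]

lemma isShuffle_insertPerm_rightBlock_iff (h : p + q = n) (h' : p + (q + 1) = n + 1)
    (i : Fin (q + 1)) (j : Fin (n + 1)) (σ : Equiv.Perm (Fin n)) :
    IsShuffle h' (insertPerm (rightBlock h' i) j σ) ↔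
      IsShuffle h σ ∧ IsCut i j (σ ∘ rightBlock h) := by
  rw [IsShuffle, IsShuffle, insertPerm_rightBlock_comp_leftBlock h,
    insertPerm_rightBlock_comp_rightBlock h, strictMono_insertNth_iff,
    strictMono_succAbove_comp_iff, and_assoc]

/-- The sign with which a shuffle `σ` enters the product `≺`: it is `0` unless the largest value is
attained on the left block. An empty left block is allowed, since the condition `σ(p) = p + q`
defining `ShL` is then void. -/
def precSign (h : p + q = n) (σ : Equiv.Perm (Fin n)) : ℤ :=
  if p = 0 ∨ ∀ k, (σ (rightBlock h k) : ℕ) + 1 < n then Equiv.Perm.sign σ else 0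

lemma val_succAbove_add_one_lt_iff {j : Fin (n + 1)} (hj : j ≠ Fin.last n) (a : Fin n) :
    (j.succAbove a : ℕ) + 1 < n + 1 ↔ (a : ℕ) + 1 < n := by
  have := Fin.val_lt_last hj
  simp only [Fin.succAbove, Fin.lt_def, Fin.val_castSucc]
  split_ifs <;> simp only [Fin.val_castSucc, Fin.val_succ] <;> omega

lemma precSign_insertPerm_leftBlock (h : p + q = n) (h' : p + 1 + q = n + 1) (hp : p ≠ 0)
    (i : Fin (p + 1)) {j : Fin (n + 1)} (hj : j ≠ Fin.last n) (σ : Equiv.Perm (Fin n)) :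
    precSign h' (insertPerm (leftBlock h' i) j σ) = (-1) ^ (j + i : ℕ) * precSign h σ := by
  have right_apply (k) := congrFun (insertPerm_leftBlock_comp_rightBlock h h' i j σ) k
  simp only [Function.comp_apply] at right_apply
  simp only [precSign, right_apply, val_succAbove_add_one_lt_iff hj, hp, p.succ_ne_zero,
    sign_insertPerm, val_leftBlock, mul_ite, mul_zero]

lemma precSign_insertPerm_rightBlock (h : p + q = n) (h' : p + (q + 1) = n + 1)
    (i : Fin (q + 1)) {j : Fin (n + 1)} (hj : j ≠ Fin.last n) (σ : Equiv.Perm (Fin n)) :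
    precSign h' (insertPerm (rightBlock h' i) j σ) =
      (-1) ^ (j + (p + i) : ℕ) * precSign h σ := by
  have right_apply (k) :
      insertPerm (rightBlock h' i) j σ (rightBlock h' (i.succAbove k)) =
        j.succAbove (σ (rightBlock h k)) := by
    rw [rightBlock_succAbove h h', insertPerm_succAbove]
  have last_iff : (∀ k, (insertPerm (rightBlock h' i) j σ (rightBlock h' k) : ℕ) + 1 < n + 1) ↔
      ∀ k, (σ (rightBlock h k) : ℕ) + 1 < n := by
    rw [Fin.forall_iff_succAbove i]
    simp only [insertPerm_self, right_apply, val_succAbove_add_one_lt_iff hj]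
    exact and_iff_right (Nat.succ_lt_succ (Fin.val_lt_last hj))
  simp only [precSign, last_iff, sign_insertPerm, val_rightBlock, mul_ite, mul_zero]

lemma mem_Sh_iff (σ : Equiv.Perm (Fin (p + q))) : σ ∈ Sh p q ↔ IsShuffle rfl σ := by
  simp only [Sh, Finset.mem_filter_univ, IsShuffle]
  refine and_congr ⟨fun hσ k l hkl ↦ hσ _ _ hkl l.isLt, fun hσ i j hij hj ↦ ?_⟩
    ⟨fun hσ k l hkl ↦ hσ _ _ (Nat.add_lt_add_left hkl p) (Nat.le_add_right p k),
      fun hσ i j hij hi ↦ ?_⟩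
  · exact hσ (a := ⟨i, hij.trans hj⟩) (b := ⟨j, hj⟩) hij
  · obtain ⟨k, rfl⟩ := (exists_rightBlock_eq_iff rfl i).2 hi
    obtain ⟨l, rfl⟩ := (exists_rightBlock_eq_iff rfl j).2 (hi.trans hij.le)
    exact hσ (Nat.lt_of_add_lt_add_left hij)

lemma mem_ShL_iff (σ : Equiv.Perm (Fin (p + q))) :
    σ ∈ ShL p q ↔
      IsShuffle rfl σ ∧ (p = 0 ∨ ∀ k, (σ (rightBlock rfl k) : ℕ) + 1 < p + q) := by
  rw [ShL, Finset.mem_filter, mem_Sh_iff]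
  refine and_congr_right fun hσ ↦ ⟨fun hlast ↦ or_iff_not_imp_left.2 fun hp k ↦ ?_, ?_⟩
  · have hlast := hlast ⟨p - 1, by omega⟩ (Nat.sub_one_add_one hp)
    have hne : σ (rightBlock rfl k) ≠ σ ⟨p - 1, by omega⟩ :=
      σ.injective.ne (Fin.ne_of_val_ne (by simp only [val_rightBlock]; omega))
    have := Fin.val_ne_of_ne hne
    omega
  · rintro (rfl | hright) i hi
    · omega
    obtain ⟨l, hl⟩ := σ.surjective ⟨p + q - 1, by omega⟩
    have hl_val : (σ l : ℕ) + 1 = p + q := by rw [hl]; exact Nat.sub_one_add_one (by omega)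
    have hlp : (l : ℕ) < p := by
      by_contra! hpl
      obtain ⟨k, rfl⟩ := (exists_rightBlock_eq_iff rfl l).2 hpl
      exact (hright k).ne hl_val
    have hli : σ l ≤ σ i :=
      hσ.1.monotone (a := ⟨l, hlp⟩) (b := ⟨i, by omega⟩) (Fin.le_def.2 (by dsimp only; omega))
    have := Fin.le_def.1 hli
    omega

end Shuffle

section Arguments

variable {X : Type*} {op : X → X → X} {p q n : ℕ}

/-- The argument of `f₁` in the summand of `f₁ ≺ f₂` indexed by `σ`. -/
def leftArg (op : X → X → X) (h : p + q = n) (σ : Equiv.Perm (Fin n)) (x : Fin n → X) :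
    Fin p → X :=
  twist op x (Finset.univ.image (σ ∘ rightBlock h)) ∘ σ ∘ leftBlock h

/-- The argument of `f₂` in the summand of `f₁ ≺ f₂` indexed by `σ`. -/
def rightArg (h : p + q = n) (σ : Equiv.Perm (Fin n)) (x : Fin n → X) : Fin q → X :=
  x ∘ σ ∘ rightBlock h

lemma yVal_eq_leftArg (σ : Equiv.Perm (Fin (p + q))) (x : Fin (p + q) → X) :
    yVal op p q σ x = leftArg op rfl σ x := by
  have filter_eq (a : Fin (p + q)) :
      ({i | p ≤ (σ.symm i : ℕ) ∧ i < a} : Finset (Fin (p + q))) =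
        {i ∈ Finset.univ.image (σ ∘ rightBlock rfl) | i < a} := by
    ext i
    simp [← exists_rightBlock_eq_iff rfl, Equiv.eq_symm_apply]
  ext k
  rw [yVal, filter_eq]
  rfl

lemma rackFace_leftArg_insertPerm (hself : ∀ x y z : X, op x (op y z) = op (op x y) (op x z))
    (ε : Bool) (h : p + q = n) (h' : p + 1 + q = n + 1) {i : Fin (p + 1)} {j : Fin (n + 1)}
    {σ : Equiv.Perm (Fin n)} (hcut : IsCut i j (σ ∘ leftBlock h)) (x : Fin (n + 1) → X) :
    rackFace op ε i (leftArg op h' (insertPerm (leftBlock h' i) j σ) x) =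
      leftArg op h σ (rackFace op ε j x) := by
  rw [leftArg, insertPerm_leftBlock_comp_rightBlock h, insertPerm_leftBlock_comp_leftBlock h,
    rackFace_comp_insertNth ε hcut, ← Finset.image_image, rackFace_twist hself, leftArg]

lemma rightArg_insertPerm_leftBlock (h : p + q = n) (h' : p + 1 + q = n + 1) (i : Fin (p + 1))
    (j : Fin (n + 1)) (σ : Equiv.Perm (Fin n)) (x : Fin (n + 1) → X) :
    rightArg h' (insertPerm (leftBlock h' i) j σ) x = rightArg h σ (rackFace op true j x) := by
  rw [rightArg, insertPerm_leftBlock_comp_rightBlock h, rightArg, rackFace_true]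
  rfl

lemma leftArg_insertPerm_rightBlock (hself : ∀ x y z : X, op x (op y z) = op (op x y) (op x z))
    (h : p + q = n) (h' : p + (q + 1) = n + 1) (i : Fin (q + 1)) (j : Fin (n + 1))
    (σ : Equiv.Perm (Fin n)) (x : Fin (n + 1) → X) :
    leftArg op h' (insertPerm (rightBlock h' i) j σ) x =
      leftArg op h σ (rackFace op false j x) := by
  have image_insertNth :
      Finset.univ.image (i.insertNth j (j.succAbove ∘ σ ∘ rightBlock h) : _ → Fin (n + 1)) =
        insert j ((Finset.univ.image (σ ∘ rightBlock h)).image j.succAbove) := by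
    ext a
    simp [Fin.exists_iff_succAbove i, eq_comm]
  rw [leftArg, insertPerm_rightBlock_comp_leftBlock h, insertPerm_rightBlock_comp_rightBlock h,
    image_insertNth]
  exact funext fun k ↦ twist_insert_succAbove hself j x _ _

lemma rackFace_rightArg_insertPerm (ε : Bool) (h : p + q = n) (h' : p + (q + 1) = n + 1)
    {i : Fin (q + 1)} {j : Fin (n + 1)} {σ : Equiv.Perm (Fin n)}
    (hcut : IsCut i j (σ ∘ rightBlock h)) (x : Fin (n + 1) → X) :
    rackFace op ε i (rightArg h' (insertPerm (rightBlock h' i) j σ) x) =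
      rightArg h σ (rackFace op ε j x) := by
  rw [rightArg, insertPerm_rightBlock_comp_rightBlock h, rackFace_comp_insertNth ε hcut, rightArg]

end Arguments

section Leibniz

variable {X A : Type*} [Ring A] {op : X → X → X} {p q n : ℕ}

open Classical in
lemma precP_comp_cast (h : p + q = n) (f₁ : (Fin p → X) → A) (f₂ : (Fin q → X) → A)
    (x : Fin n → X) :
    precP op p q f₁ f₂ (x ∘ Fin.cast h) =
      ∑ σ with IsShuffle h σ,
        precSign h σ • (f₁ (leftArg op h σ x) * f₂ (rightArg h σ x)) := by
  subst h
  simp only [precSign, ite_smul, zero_smul]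
  rw [← Finset.sum_filter, Finset.filter_filter]
  refine Finset.sum_congr (Finset.ext fun σ ↦ ?_) fun σ _ ↦ ?_
  · rw [mem_ShL_iff, Finset.mem_filter_univ]
  · rw [← yVal_eq_leftArg]
    rfl

open Classical in
lemma rackDiff_precP (f₁ : (Fin p → X) → A) (f₂ : (Fin q → X) → A) (x : Fin (p + q + 1) → X) :
    rackDiff op (precP op p q f₁ f₂) x =
      ∑ j : Fin (p + q + 1), ∑ σ with IsShuffle rfl σ, ((-1) ^ (j + 1 : ℕ) * precSign rfl σ) •
        (f₁ (leftArg op rfl σ (rackFace op false j x)) *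
            f₂ (rightArg rfl σ (rackFace op false j x)) -
          f₁ (leftArg op rfl σ (rackFace op true j x)) *
            f₂ (rightArg rfl σ (rackFace op true j x))) := by
  have expand (y) := precP_comp_cast (op := op) rfl f₁ f₂ y
  simp only [Fin.cast_refl, Function.comp_id] at expand
  refine Finset.sum_congr rfl fun j _ ↦ ?_
  rw [expand, expand, ← Finset.sum_sub_distrib, Finset.smul_sum]
  exact Finset.sum_congr rfl fun σ _ ↦ by rw [← smul_sub, smul_smul]

open Classical in
lemma precP_rackDiff_left (hself : ∀ x y z : X, op x (op y z) = op (op x y) (op x z))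
    (h : p + q = n) (h' : p + 1 + q = n + 1) (f₁ : (Fin p → X) → A) (f₂ : (Fin q → X) → A)
    (x : Fin (n + 1) → X) :
    precP op (p + 1) q (rackDiff op f₁) f₂ (x ∘ Fin.cast h') =
      ∑ j : Fin (n + 1), ∑ σ with IsShuffle h σ, ((-1) ^ (j + 1 : ℕ) * precSign h σ) •
        ((f₁ (leftArg op h σ (rackFace op false j x)) -
            f₁ (leftArg op h σ (rackFace op true j x))) *
          f₂ (rightArg h σ (rackFace op true j x))) := by
  rw [precP_comp_cast, ← sum_sum_eq_sum_sum_of_insertPerm (leftBlock h) (leftBlock h')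
    (isShuffle_insertPerm_leftBlock_iff h h') (fun σ hσ ↦ hσ.1.monotone)
    (G := fun τ i ↦ (precSign h' τ * (-1) ^ (i + 1 : ℕ)) •
      ((f₁ (rackFace op false i (leftArg op h' τ x)) -
        f₁ (rackFace op true i (leftArg op h' τ x))) * f₂ (rightArg h' τ x)))]
  · refine Finset.sum_congr rfl fun τ _ ↦ ?_
    simp only [rackDiff, Finset.sum_mul, Finset.smul_sum, smul_mul_assoc, smul_smul]
  · intro i j σ hcut
    simp only [rackFace_leftArg_insertPerm hself _ h h' hcut,
      rightArg_insertPerm_leftBlock (op := op) h h']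
    rcases eq_or_ne p 0 with rfl | hp
    · simp [Subsingleton.elim (leftArg op h σ (rackFace op false j x))
        (leftArg op h σ (rackFace op true j x))]
    rcases eq_or_ne j (Fin.last n) with rfl | hj
    · simp [rackFace_last]
    rw [precSign_insertPerm_leftBlock h h' hp i hj]
    congr 1
    have sign_i : (-1 : ℤ) ^ (i : ℕ) * (-1) ^ (i : ℕ) = 1 := pow_mul_pow_eq_one i rfl
    linear_combination (-(-1) ^ (j : ℕ) * precSign h σ) * sign_i

open Classical in
lemma precP_rackDiff_right (hself : ∀ x y z : X, op x (op y z) = op (op x y) (op x z))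
    (h : p + q = n) (h' : p + (q + 1) = n + 1) (f₁ : (Fin p → X) → A) (f₂ : (Fin q → X) → A)
    (x : Fin (n + 1) → X) :
    (-1 : ℤ) ^ p • precP op p (q + 1) f₁ (rackDiff op f₂) (x ∘ Fin.cast h') =
      ∑ j : Fin (n + 1), ∑ σ with IsShuffle h σ, ((-1) ^ (j + 1 : ℕ) * precSign h σ) •
        (f₁ (leftArg op h σ (rackFace op false j x)) *
          (f₂ (rightArg h σ (rackFace op false j x)) -
            f₂ (rightArg h σ (rackFace op true j x)))) := by
  rw [precP_comp_cast, ← sum_sum_eq_sum_sum_of_insertPerm (rightBlock h) (rightBlock h')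
    (isShuffle_insertPerm_rightBlock_iff h h') (fun σ hσ ↦ hσ.2.monotone)
    (G := fun τ i ↦ ((-1) ^ p * (precSign h' τ * (-1) ^ (i + 1 : ℕ))) •
      (f₁ (leftArg op h' τ x) * (f₂ (rackFace op false i (rightArg h' τ x)) -
        f₂ (rackFace op true i (rightArg h' τ x)))))]
  · rw [Finset.smul_sum]
    refine Finset.sum_congr rfl fun τ _ ↦ ?_
    simp only [rackDiff, Finset.mul_sum, Finset.smul_sum, mul_smul_comm, smul_smul]
  · intro i j σ hcut
    simp only [rackFace_rightArg_insertPerm _ h h' hcut, leftArg_insertPerm_rightBlock hself h h']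
    rcases eq_or_ne j (Fin.last n) with rfl | hj
    · simp [rackFace_last]
    rw [precSign_insertPerm_rightBlock h h' i hj]
    congr 1
    have sign_i : (-1 : ℤ) ^ (i : ℕ) * (-1) ^ (i : ℕ) = 1 := pow_mul_pow_eq_one i rfl
    have sign_p : (-1 : ℤ) ^ p * (-1) ^ p = 1 := pow_mul_pow_eq_one p rfl
    linear_combination (-(-1) ^ (j : ℕ) * precSign h σ) *
      ((-1) ^ p * (-1) ^ p * sign_i + sign_p)

theorem statement4_general (hself : ∀ x y z : X, op x (op y z) = op (op x y) (op x z))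
    (f₁ : (Fin p → X) → A) (f₂ : (Fin q → X) → A) (x : Fin (p + q + 1) → X) :
    rackDiff op (precP op p q f₁ f₂) x =
      precP op (p + 1) q (rackDiff op f₁) f₂ (x ∘ Fin.cast (Nat.add_right_comm p 1 q)) +
      (-1 : ℤ) ^ p • precP op p (q + 1) f₁ (rackDiff op f₂)
        (x ∘ Fin.cast (Nat.add_assoc p q 1).symm) := by
  rw [rackDiff_precP, precP_rackDiff_left hself rfl, precP_rackDiff_right hself rfl,
    ← Finset.sum_add_distrib]
  refine Finset.sum_congr rfl fun j _ ↦ ?_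
  rw [← Finset.sum_add_distrib]
  refine Finset.sum_congr rfl fun σ _ ↦ ?_
  rw [← smul_add]
  congr 1
  noncomm_ring

end Leibniz

/-- For a rack `(X, ▷)` and an associative ring `A` (trivial coefficients),
the rack differential is a derivation for `≺`:
`d_R(f₁ ≺ f₂) = (d_R f₁) ≺ f₂ + (−1)^{p₁} f₁ ≺ (d_R f₂)`. -/
theorem statement4 {X A : Type*} [Ring A] (op : X → X → X)
    (hself : ∀ x y z : X, op x (op y z) = op (op x y) (op x z))
    (hbij : ∀ x : X, Function.Bijective (op x))
    (p₁ p₂ : ℕ) (f₁ : (Fin p₁ → X) → A) (f₂ : (Fin p₂ → X) → A)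
    (x : Fin (p₁ + p₂ + 1) → X) :
    rackDiff op (precP op p₁ p₂ f₁ f₂) x =
      precP op (p₁ + 1) p₂ (rackDiff op f₁) f₂
        (x ∘ Fin.cast (show p₁ + 1 + p₂ = p₁ + p₂ + 1 by omega)) +
      ((-1 : ℤ) ^ p₁) •
        precP op p₁ (p₂ + 1) f₁ (rackDiff op f₂)
          (x ∘ Fin.cast (show p₁ + (p₂ + 1) = p₁ + p₂ + 1 by omega)) := by
  exact statement4_general hself f₁ f₂ x
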